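/- As linear maps V_{t₁}⊗V_{t₂}⊗V_{t₃} → V_{t₈}: L_{t₁,t₉}∘(I_{t₁}⊗L'_{t₂,t₃}) = −((−1)^{σ₂}·λ₁/(λ₁+λ₂))·L_{t₇,t₃}∘(L'_{t₁,t₂}⊗I_{t₃}) + L'_{t₄,t₃}∘(L_{t₁,t₂}⊗I_{t₃}), and L'_{t₁,t₆}∘(I_{t₁}⊗L_{t₂,t₃}) = κ·L_{t₇,t₃}∘(L'_{t₁,t₂}⊗I_{t₃}) + ((−1)^{σ₂}·λ₃/(λ₂+λ₃))·L'_{t₄,t₃}∘(L_{t₁,t₂}⊗I_{t₃}). -/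

import Mathlib

set_option linter.unusedVariables false

open TensorProduct

noncomputable section

/-- a triple t = (λ, μ, σ) ∈ ℚ × ℚ × ℤ/2 -/
structure Triple where
  lam : ℚ
  mu : ℚ
  sg : ZMod 2

instance : Add Triple := ⟨fun a b => ⟨a.lam + b.lam, a.mu + b.mu, a.sg + b.sg⟩⟩
instance : Neg Triple := ⟨fun a => ⟨-a.lam, -a.mu, -a.sg⟩⟩
instance : Sub Triple := ⟨fun a b => a + -b⟩

def e₂ : Triple := ⟨0, 1, 0⟩
def e₃ : Triple := ⟨0, 0, 1⟩
/-- t* = (−λ, −μ, σ+1) -/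
def Triple.star (t : Triple) : Triple := ⟨-t.lam, -t.mu, t.sg + 1⟩

/-- the underlying space of every V_t: basis v = (1,0) (degree σ), w = (0,1) (degree σ+1) -/
abbrev V : Type := ℚ × ℚ
abbrev VV : Type := V ⊗[ℚ] V
abbrev VVV : Type := V ⊗[ℚ] VV

def vv : V := (1, 0)
def ww : V := (0, 1)

/-- (−1)^σ -/
def sgn (s : ZMod 2) : ℚ := if s = 0 then 1 else -1

/-- H: v ↦ (μ+1)v, w ↦ (μ−1)w -/
def opH (t : Triple) : V →ₗ[ℚ] V :=
  LinearMap.prodMap ((t.mu + 1) • LinearMap.id) ((t.mu - 1) • LinearMap.id)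
/-- D: multiplication by λ -/
def opD (t : Triple) : V →ₗ[ℚ] V := t.lam • LinearMap.id
/-- E: v ↦ 0, w ↦ λv -/
def opE (t : Triple) : V →ₗ[ℚ] V := (LinearMap.inl ℚ ℚ ℚ) ∘ₗ (t.lam • LinearMap.snd ℚ ℚ ℚ)
/-- F: v ↦ w, w ↦ 0 -/
def opF (t : Triple) : V →ₗ[ℚ] V := (LinearMap.inr ℚ ℚ ℚ) ∘ₗ (LinearMap.fst ℚ ℚ ℚ)
/-- the parity operator x ↦ (−1)^{deg x} x on V_t -/
def opJ (t : Triple) : V →ₗ[ℚ] V :=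
  LinearMap.prodMap (sgn t.sg • LinearMap.id) ((- sgn t.sg) • LinearMap.id)

/-- the four generators H, D, E, F of gl(1|1) -/
inductive Gen | H | D | E | F

/-- H and D have degree 0; E and F have degree 1 -/
def Gen.isEven : Gen → Bool
  | .H => true | .D => true | .E => false | .F => false

def op : Gen → Triple → V →ₗ[ℚ] V
  | .H, t => opH t
  | .D, t => opD t
  | .E, t => opE t
  | .F, t => opF t

/-- the super-Leibniz action X·(x⊗y) = (X·x)⊗y + (−1)^{deg X·deg x}·x⊗(X·y)
on V_{t₁}⊗V_{t₂} (the sign being implemented by the parity operator) -/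
def op2 (g : Gen) (t₁ t₂ : Triple) : VV →ₗ[ℚ] VV :=
  TensorProduct.map (op g t₁) LinearMap.id +
  TensorProduct.map (if g.isEven then LinearMap.id else opJ t₁) (op g t₂)

/-- the linear map ℚ×ℚ → M sending (1,0) ↦ p and (0,1) ↦ q -/
def bmap {M : Type*} [AddCommGroup M] [Module ℚ M] (p q : M) : V →ₗ[ℚ] M :=
  LinearMap.coprod (LinearMap.toSpanSingleton ℚ M p) (LinearMap.toSpanSingleton ℚ M q)

/-- Y_{t₁,t₂} : V_{t₁+t₂+e₂} → V_{t₁}⊗V_{t₂} -/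
def Ymap (t₁ t₂ : Triple) : V →ₗ[ℚ] VV :=
  bmap (vv ⊗ₜ[ℚ] vv) (ww ⊗ₜ[ℚ] vv + sgn t₁.sg • (vv ⊗ₜ[ℚ] ww))

/-- Y'_{t₁,t₂} : V_{t₁+t₂−e₂+e₃} → V_{t₁}⊗V_{t₂} -/
def Y'map (t₁ t₂ : Triple) : V →ₗ[ℚ] VV :=
  bmap ((t₁.lam + t₂.lam)⁻¹ •
      (t₁.lam • (vv ⊗ₜ[ℚ] ww) - (sgn t₁.sg * t₂.lam) • (ww ⊗ₜ[ℚ] vv)))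
    (ww ⊗ₜ[ℚ] ww)

/-- L_{t₁,t₂} : V_{t₁}⊗V_{t₂} → V_{t₁+t₂+e₂} -/
def Lmap (t₁ t₂ : Triple) : VV →ₗ[ℚ] V :=
  TensorProduct.lift (LinearMap.mk₂ ℚ
    (fun x y => ((x.1 * y.1 : ℚ),
      (t₁.lam / (t₁.lam + t₂.lam)) * (x.2 * y.1)
        + (sgn t₁.sg * t₂.lam / (t₁.lam + t₂.lam)) * (x.1 * y.2)))
    (by intro x x' y; apply Prod.ext <;> simp <;> ring)
    (by intro a x y; apply Prod.ext <;> simp [smul_eq_mul] <;> ring)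
    (by intro x y y'; apply Prod.ext <;> simp <;> ring)
    (by intro a x y; apply Prod.ext <;> simp [smul_eq_mul] <;> ring))

/-- L'_{t₁,t₂} : V_{t₁}⊗V_{t₂} → V_{t₁+t₂−e₂+e₃} -/
def L'map (t₁ t₂ : Triple) : VV →ₗ[ℚ] V :=
  TensorProduct.lift (LinearMap.mk₂ ℚ
    (fun x y => ((x.1 * y.2 - sgn t₁.sg * (x.2 * y.1) : ℚ), (x.2 * y.2 : ℚ)))
    (by intro x x' y; apply Prod.ext <;> simp <;> ring)
    (by intro a x y; apply Prod.ext <;> simp [smul_eq_mul] <;> ring)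
    (by intro x y y'; apply Prod.ext <;> simp <;> ring)
    (by intro a x y; apply Prod.ext <;> simp [smul_eq_mul] <;> ring))

/-- ∩_t : V_{t*}⊗V_t → ℚ -/
def capMap (t : Triple) : VV →ₗ[ℚ] ℚ :=
  TensorProduct.lift (LinearMap.mk₂ ℚ
    (fun x y => (x.1 * y.2 + sgn t.sg * (x.2 * y.1) : ℚ))
    (by intro x x' y; simp; ring)
    (by intro a x y; simp [smul_eq_mul]; ring)
    (by intro x y y'; simp; ring)
    (by intro a x y; simp [smul_eq_mul]; ring))

/-- ∪_t : ℚ → V_{t*}⊗V_t -/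
def cupMap (t : Triple) : ℚ →ₗ[ℚ] VV :=
  LinearMap.toSpanSingleton ℚ VV (ww ⊗ₜ[ℚ] vv - sgn t.sg • (vv ⊗ₜ[ℚ] ww))


/-- t₄ = t₁+t₂+e₂ -/
def T4 (t₁ t₂ : Triple) : Triple := t₁ + t₂ + e₂
/-- t₅ = t₄+t₃+e₂ -/
def T5 (t₁ t₂ t₃ : Triple) : Triple := T4 t₁ t₂ + t₃ + e₂
/-- t₆ = t₂+t₃+e₂ -/
def T6 (t₂ t₃ : Triple) : Triple := t₂ + t₃ + e₂
/-- t₇ = t₄−2e₂+e₃ -/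
def T7 (t₁ t₂ : Triple) : Triple := T4 t₁ t₂ - e₂ - e₂ + e₃
/-- t₈ = t₅−2e₂+e₃ -/
def T8 (t₁ t₂ t₃ : Triple) : Triple := T5 t₁ t₂ t₃ - e₂ - e₂ + e₃
/-- t₉ = t₆−2e₂+e₃ -/
def T9 (t₂ t₃ : Triple) : Triple := T6 t₂ t₃ - e₂ - e₂ + e₃
/-- κ = λ₂(λ₁+λ₂+λ₃)/((λ₁+λ₂)(λ₂+λ₃)) -/
def kap (t₁ t₂ t₃ : Triple) : ℚ :=
  t₂.lam * (t₁.lam + t₂.lam + t₃.lam) / ((t₁.lam + t₂.lam) * (t₂.lam + t₃.lam))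

theorem vvv_ext (f g : VVV →ₗ[ℚ] V)
    (h : ∀ x y z : V, f (x ⊗ₜ[ℚ] (y ⊗ₜ[ℚ] z)) = g (x ⊗ₜ[ℚ] (y ⊗ₜ[ℚ] z))) : f = g :=
  TensorProduct.ext (LinearMap.ext fun x => TensorProduct.ext' fun y z => h x y z)

theorem sgn_add (a b : ZMod 2) : sgn (a + b) = sgn a * sgn b := by
  revert a b
  unfold sgn
  decide +kernel

theorem sgn_sq (a : ZMod 2) : sgn a * sgn a = 1 := by
  unfold sgn
  split_ifs <;> norm_num

theorem Lmap_tmul (t₁ t₂ : Triple) (x y : V) : Lmap t₁ t₂ (x ⊗ₜ[ℚ] y) =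
    ((x.1 * y.1 : ℚ), (t₁.lam / (t₁.lam + t₂.lam)) * (x.2 * y.1)
        + (sgn t₁.sg * t₂.lam / (t₁.lam + t₂.lam)) * (x.1 * y.2)) := by
  simp [Lmap]

theorem L'map_tmul (t₁ t₂ : Triple) (x y : V) : L'map t₁ t₂ (x ⊗ₜ[ℚ] y) =
    ((x.1 * y.2 - sgn t₁.sg * (x.2 * y.1) : ℚ), (x.2 * y.2 : ℚ)) := by
  simp [L'map]

theorem T4_lam (a b : Triple) : (T4 a b).lam = a.lam + b.lam := by
  change a.lam + b.lam + 0 = _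
  ring
theorem T6_lam (a b : Triple) : (T6 a b).lam = a.lam + b.lam := T4_lam a b
theorem T7_lam (a b : Triple) : (T7 a b).lam = a.lam + b.lam := by
  change a.lam + b.lam + 0 + -0 + -0 + 0 = _
  ring
theorem T9_lam (a b : Triple) : (T9 a b).lam = a.lam + b.lam := T7_lam a b
theorem T4_sgn (a b : Triple) : sgn (T4 a b).sg = sgn a.sg * sgn b.sg := by
  rw [← sgn_add]
  change sgn (a.sg + b.sg + 0) = _
  rw [add_zero]
theorem T7_sgn (a b : Triple) : sgn (T7 a b).sg = - (sgn a.sg * sgn b.sg) := by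
  have h : sgn 1 = -1 := by simp [sgn]
  change sgn (a.sg + b.sg + 0 + -0 + -0 + 1) = _
  rw [sgn_add, h, neg_zero, add_zero, add_zero, add_zero, sgn_add]
  ring

/-- Corollary 25: change of dual bases in
Hom(V_{t₁}⊗V_{t₂}⊗V_{t₃}, V_{t₈}). -/
theorem stmt13 (t₁ t₂ t₃ : Triple)
    (h₁ : t₁.lam ≠ 0) (h₂ : t₂.lam ≠ 0) (h₃ : t₃.lam ≠ 0)
    (h₁₂ : t₁.lam + t₂.lam ≠ 0) (h₂₃ : t₂.lam + t₃.lam ≠ 0)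
    (h₁₂₃ : t₁.lam + t₂.lam + t₃.lam ≠ 0) :
    Lmap t₁ (T9 t₂ t₃) ∘ₗ TensorProduct.map LinearMap.id (L'map t₂ t₃) =
      (-(sgn t₂.sg * t₁.lam / (t₁.lam + t₂.lam))) •
        (Lmap (T7 t₁ t₂) t₃ ∘ₗ TensorProduct.map (L'map t₁ t₂) LinearMap.id
          ∘ₗ (TensorProduct.assoc ℚ V V V).symm.toLinearMap)
      + (L'map (T4 t₁ t₂) t₃ ∘ₗ TensorProduct.map (Lmap t₁ t₂) LinearMap.id
          ∘ₗ (TensorProduct.assoc ℚ V V V).symm.toLinearMap) ∧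
    L'map t₁ (T6 t₂ t₃) ∘ₗ TensorProduct.map LinearMap.id (Lmap t₂ t₃) =
      kap t₁ t₂ t₃ •
        (Lmap (T7 t₁ t₂) t₃ ∘ₗ TensorProduct.map (L'map t₁ t₂) LinearMap.id
          ∘ₗ (TensorProduct.assoc ℚ V V V).symm.toLinearMap)
      + (sgn t₂.sg * t₃.lam / (t₂.lam + t₃.lam)) •
        (L'map (T4 t₁ t₂) t₃ ∘ₗ TensorProduct.map (Lmap t₁ t₂) LinearMap.id
          ∘ₗ (TensorProduct.assoc ℚ V V V).symm.toLinearMap) := by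
  have q1 := sgn_sq t₁.sg
  have q2 := sgn_sq t₂.sg
  have h₁₂₃' : t₁.lam + (t₂.lam + t₃.lam) ≠ 0 := by rwa [← add_assoc]
  constructor
  all_goals
    refine vvv_ext _ _ fun x y z => ?_
    simp only [LinearMap.comp_apply,
      LinearMap.add_apply, LinearMap.smul_apply, TensorProduct.map_tmul, LinearMap.id_apply,
      LinearEquiv.coe_coe, TensorProduct.assoc_symm_tmul, Lmap_tmul, L'map_tmul,
      T4_lam, T6_lam, T7_lam, T9_lam, T4_sgn, T7_sgn, kap]
    generalize sgn t₁.sg = s1 at *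
    generalize sgn t₂.sg = s2 at *
    generalize t₁.lam = a at *
    generalize t₂.lam = b at *
    generalize t₃.lam = c at *
    obtain ⟨x1, x2⟩ := x
    obtain ⟨y1, y2⟩ := y
    obtain ⟨z1, z2⟩ := z
    try rw [← add_assoc a b c]
    have q1' : s1 = 1 ∨ s1 = -1 := mul_self_eq_one_iff.mp q1
    have q2' : s2 = 1 ∨ s2 = -1 := mul_self_eq_one_iff.mp q2
    apply Prod.ext
    all_goals
      simp only [Prod.smul_mk, Prod.mk_add_mk, smul_eq_mul]
      rcases q1' with rfl | rfl <;> rcases q2' with rfl | rfl <;> field_simp <;> ring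
end
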